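/- For every n ≥ 1, the diameter of S_n under the translocation distance equals n − 1; that is, d∘(σ,π) ≤ n − 1 for all σ, π ∈ S_n, and there exist σ, π ∈ S_n with d∘(σ,π) = n − 1. -/

import Mathlib

/-- `IsMove l l'` holds if `l'` is obtained from `l` by a single translocation:
removing the element at position `i` and reinserting it at position `j`. -/
def IsMove {α : Type*} (l l' : List α) : Prop :=
  ∃ i j : Fin l.length, l' = (l.eraseIdx i).insertIdx j (l.get i)

/-- `ReachIn step m l l'` holds if `l'` can be obtained from `l` by `m` applications
of the relation `step`. -/
def ReachIn {α : Type*} (step : List α → List α → Prop) : ℕ → List α → List α → Prop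
  | 0, l, l' => l = l'
  | m+1, l, l' => ∃ l'', step l l'' ∧ ReachIn step m l'' l'

/-- The one-line notation of a permutation of `Fin n`. -/
def oneLine {n : ℕ} (σ : Equiv.Perm (Fin n)) : List (Fin n) := List.ofFn σ

/-- The translocation distance: the minimum number of translocations transforming
the one-line notation of `σ` into that of `π`. -/
noncomputable def translocDist {n : ℕ} (σ π : Equiv.Perm (Fin n)) : ℕ :=
  sInf {m | ReachIn IsMove m (oneLine σ) (oneLine π)}

/-!
A list of length `n` is rearranged into any other order by fixing its entries from left to right,
one move each; the last entry then falls into place, so `n - 1` moves suffice. Conversely, a move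
preserves the relative order of all entries other than the one it moves, so after `m` moves some
`n - m` of the entries still stand in their original relative order. A decreasing and an increasing
sequence share no subsequence of length two, so reversing `1, …, n` takes at least `n - 1` moves.
-/

section List

variable {α β : Type*} {l l' s : List α} {m : ℕ}

theorem ReachIn.map {step : List α → List α → Prop} {step' : List β → List β → Prop}
    {f : List α → List β} (hf : ∀ {l l'}, step l l' → step' (f l) (f l'))
    (h : ReachIn step m l l') : ReachIn step' m (f l) (f l') := by
  induction m generalizing l with
  | zero => exact congrArg f h
  | succ m ih =>
    obtain ⟨l₁, hmove, hreach⟩ := h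
    exact ⟨f l₁, hf hmove, ih hreach⟩

theorem isMove_append_cons (a b : List α) (x : α) : IsMove (a ++ x :: b) (x :: (a ++ b)) :=
  ⟨⟨a.length, by simp⟩, ⟨0, by simp⟩, by simp [List.eraseIdx_append_of_length_le]⟩

theorem IsMove.cons (x : α) (h : IsMove l l') : IsMove (x :: l) (x :: l') := by
  obtain ⟨i, j, rfl⟩ := h
  exact ⟨i.succ, j.succ, by simp⟩

theorem reachIn_isMove_of_perm (h : l.Perm l') : ReachIn IsMove (l'.length - 1) l l' := by
  induction l' generalizing l with
  | nil => exact h.eq_nil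
  | cons x t ih =>
    cases t with
    | nil => exact List.perm_singleton.mp h
    | cons y t =>
      obtain ⟨a, b, rfl⟩ := List.append_of_mem (h.mem_iff.mpr List.mem_cons_self)
      have hrest : (a ++ b).Perm (y :: t) := (List.perm_middle.symm.trans h).cons_inv
      exact ⟨x :: (a ++ b), isMove_append_cons a b x, (ih hrest).map (.cons x)⟩

theorem exists_sublist_eraseIdx (h : s.Sublist l) (j : ℕ) :
    ∃ s' : List α, s'.Sublist s ∧ s'.Sublist (l.eraseIdx j) ∧ s.length ≤ s'.length + 1 := by
  rw [← List.take_append_drop j l] at h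
  obtain ⟨s₁, s₂, rfl, h₁, h₂⟩ := List.sublist_append_iff.mp h
  refine ⟨s₁ ++ s₂.tail, (List.tail_sublist s₂).append_left s₁, ?_, ?_⟩
  · rw [List.eraseIdx_eq_take_drop_succ, ← List.tail_drop]
    exact h₁.append h₂.tail
  · simp only [List.length_append, List.length_tail]
    omega

theorem IsMove.exists_eraseIdx_sublist (h : IsMove l l') :
    ∃ j : ℕ, (l'.eraseIdx j).Sublist l := by
  obtain ⟨i, j, rfl⟩ := h
  exact ⟨j, by simpa only [List.eraseIdx_insertIdx_self] using List.eraseIdx_sublist l i⟩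

theorem ReachIn.exists_common_sublist (h : ReachIn IsMove m l l') :
    ∃ s : List α, s.Sublist l ∧ s.Sublist l' ∧ l'.length ≤ s.length + m := by
  induction m generalizing l with
  | zero =>
    obtain rfl : l = l' := h
    exact ⟨l, .refl l, .refl l, le_rfl⟩
  | succ m ih =>
    obtain ⟨l₁, hmove, hreach⟩ := h
    obtain ⟨s, hsl₁, hsl', hlen⟩ := ih hreach
    obtain ⟨j, hj⟩ := hmove.exists_eraseIdx_sublist
    obtain ⟨s', hs's, hs'l₁, hlen'⟩ := exists_sublist_eraseIdx hsl₁ j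
    exact ⟨s', hs'l₁.trans hj, hs's.trans hsl', by omega⟩

theorem length_le_one_of_sortedGT_of_sortedLT [Preorder α] (hgt : s.SortedGT)
    (hlt : s.SortedLT) : s.length ≤ 1 := by
  by_contra! hlen
  have h01 : (⟨0, by omega⟩ : Fin s.length) < ⟨1, hlen⟩ := Nat.zero_lt_one
  exact lt_asymm (hgt h01) (hlt h01)

theorem ReachIn.length_le_of_sortedGT_of_sortedLT [Preorder α] (h : ReachIn IsMove m l l')
    (hl : l.SortedGT) (hl' : l'.SortedLT) : l'.length ≤ m + 1 := by
  obtain ⟨s, hsl, hsl', hlen⟩ := h.exists_common_sublist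
  have hs : s.length ≤ 1 := length_le_one_of_sortedGT_of_sortedLT
    (hl.pairwise.sublist hsl).sortedGT (hl'.pairwise.sublist hsl').sortedLT
  omega

end List

section Perm

variable {n : ℕ} (σ π : Equiv.Perm (Fin n))

theorem length_oneLine : (oneLine σ).length = n :=
  List.length_ofFn

theorem oneLine_perm_oneLine : (oneLine σ).Perm (oneLine π) :=
  (σ.ofFn_comp_perm id).trans (π.ofFn_comp_perm id).symm

theorem reachIn_isMove_oneLine : ReachIn IsMove (n - 1) (oneLine σ) (oneLine π) := by
  simpa only [length_oneLine] using reachIn_isMove_of_perm (oneLine_perm_oneLine σ π)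

theorem translocDist_le : translocDist σ π ≤ n - 1 :=
  Nat.sInf_le (reachIn_isMove_oneLine σ π)

theorem reachIn_translocDist : ReachIn IsMove (translocDist σ π) (oneLine σ) (oneLine π) :=
  Nat.sInf_mem (s := {m | ReachIn IsMove m (oneLine σ) (oneLine π)})
    ⟨n - 1, reachIn_isMove_oneLine σ π⟩

end Perm

theorem le_translocDist_revPerm_refl (n : ℕ) :
    n - 1 ≤ translocDist (Fin.revPerm : Equiv.Perm (Fin n)) (Equiv.refl (Fin n)) := by
  have hrev : (oneLine (Fin.revPerm : Equiv.Perm (Fin n))).SortedGT :=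
    Fin.rev_strictAnti.sortedGT_ofFn
  have hrefl : (oneLine (Equiv.refl (Fin n))).SortedLT := strictMono_id.sortedLT_ofFn
  have hlen := (reachIn_translocDist _ _).length_le_of_sortedGT_of_sortedLT hrev hrefl
  rw [length_oneLine] at hlen
  omega

/-- For every `n ≥ 1`, the diameter of `S_n` under the translocation distance equals
`n − 1`: every pair of permutations is at distance at most `n − 1`, and some pair is
at distance exactly `n − 1`. -/
theorem translocDist_diameter (n : ℕ) (hn : 1 ≤ n) :
    (∀ σ π : Equiv.Perm (Fin n), translocDist σ π ≤ n - 1) ∧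
    (∃ σ π : Equiv.Perm (Fin n), translocDist σ π = n - 1) := by
  refine ⟨translocDist_le, Fin.revPerm, Equiv.refl (Fin n), ?_⟩
  exact le_antisymm (translocDist_le _ _) (le_translocDist_revPerm_refl n)
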